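/- Let Ω ⊆ ℝ³ be open and let α(x) = α₁(x₁)e₁ + α₂(x₂)e₂ + α₃(x₃)e₃, where α₁, α₂, α₃ : ℝ → ℂ are continuously differentiable functions of a single variable. Define the scalar potentials w_k := Dα^{(k)} − α² for k = 0,1,2,3; explicitly, with s := α₁² + α₂² + α₃² (so α² = −s), w₀ = −(α₁' + α₂' + α₃') + s, w₁ = −α₁' + α₂' + α₃' + s, w₂ = α₁' − α₂' + α₃' + s, w₃ = α₁' + α₂' − α₃' + s (each α_j' evaluated at x_j). If f : Ω → ℍ(ℂ) is twice differentiable and satisfies Df + fα = 0 on Ω, then each component f_k (k = 0,1,2,3) satisfies the scalar Schrödinger equation −Δf_k + w_k f_k = 0 on Ω. -/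

import Mathlib

noncomputable section

abbrev HC := Quaternion ℂ

def e1 : HC := ⟨0, 1, 0, 0⟩
def e2 : HC := ⟨0, 0, 1, 0⟩
def e3 : HC := ⟨0, 0, 0, 1⟩

def pd (k : Fin 3) (g : (Fin 3 → ℝ) → ℂ) (x : Fin 3 → ℝ) : ℂ :=
  fderiv ℝ g x (Pi.single k 1)

def lap (g : (Fin 3 → ℝ) → ℂ) (x : Fin 3 → ℝ) : ℂ :=
  pd 0 (pd 0 g) x + pd 1 (pd 1 g) x + pd 2 (pd 2 g) x

def pdq (k : Fin 3) (f : (Fin 3 → ℝ) → HC) (x : Fin 3 → ℝ) : HC :=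
  ⟨pd k (fun y => (f y).re) x, pd k (fun y => (f y).imI) x,
   pd k (fun y => (f y).imJ) x, pd k (fun y => (f y).imK) x⟩

def Dq (f : (Fin 3 → ℝ) → HC) (x : Fin 3 → ℝ) : HC :=
  e1 * pdq 0 f x + e2 * pdq 1 f x + e3 * pdq 2 f x

def lapq (f : (Fin 3 → ℝ) → HC) (x : Fin 3 → ℝ) : HC :=
  ⟨lap (fun y => (f y).re) x, lap (fun y => (f y).imI) x,
   lap (fun y => (f y).imJ) x, lap (fun y => (f y).imK) x⟩

def QDiffOn (f : (Fin 3 → ℝ) → HC) (Ω : Set (Fin 3 → ℝ)) : Prop :=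
  DifferentiableOn ℝ (fun y => (f y).re) Ω ∧ DifferentiableOn ℝ (fun y => (f y).imI) Ω ∧
  DifferentiableOn ℝ (fun y => (f y).imJ) Ω ∧ DifferentiableOn ℝ (fun y => (f y).imK) Ω

def QC2On (f : (Fin 3 → ℝ) → HC) (Ω : Set (Fin 3 → ℝ)) : Prop :=
  ContDiffOn ℝ 2 (fun y => (f y).re) Ω ∧ ContDiffOn ℝ 2 (fun y => (f y).imI) Ω ∧
  ContDiffOn ℝ 2 (fun y => (f y).imJ) Ω ∧ ContDiffOn ℝ 2 (fun y => (f y).imK) Ω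


/-- Build a biquaternion from its four complex components. -/
def quat (a b c d : ℂ) : HC := ⟨a, b, c, d⟩

/-- The diagonal purely vectorial function `α(x) = α₁(x₁)e₁ + α₂(x₂)e₂ + α₃(x₃)e₃`. -/
def dal (a1 a2 a3 : ℝ → ℂ) (x : Fin 3 → ℝ) : HC :=
  quat 0 (a1 (x 0)) (a2 (x 1)) (a3 (x 2))

/-- `s = α₁² + α₂² + α₃²` (so that `α² = −s`). -/
def sq3 (a1 a2 a3 : ℝ → ℂ) (x : Fin 3 → ℝ) : ℂ :=
  a1 (x 0) ^ 2 + a2 (x 1) ^ 2 + a3 (x 2) ^ 2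

/-- The scalar potentials `v_k = −Dα^{(k)} − α²`, written explicitly. -/
def vpot (a1 a2 a3 : ℝ → ℂ) : Fin 4 → (Fin 3 → ℝ) → ℂ :=
  ![fun x => deriv a1 (x 0) + deriv a2 (x 1) + deriv a3 (x 2) + sq3 a1 a2 a3 x,
    fun x => deriv a1 (x 0) - deriv a2 (x 1) - deriv a3 (x 2) + sq3 a1 a2 a3 x,
    fun x => -deriv a1 (x 0) + deriv a2 (x 1) - deriv a3 (x 2) + sq3 a1 a2 a3 x,
    fun x => -deriv a1 (x 0) - deriv a2 (x 1) + deriv a3 (x 2) + sq3 a1 a2 a3 x]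

/-- The scalar potentials `w_k = Dα^{(k)} − α²`, written explicitly. -/
def wpot (a1 a2 a3 : ℝ → ℂ) : Fin 4 → (Fin 3 → ℝ) → ℂ :=
  ![fun x => -(deriv a1 (x 0) + deriv a2 (x 1) + deriv a3 (x 2)) + sq3 a1 a2 a3 x,
    fun x => -deriv a1 (x 0) + deriv a2 (x 1) + deriv a3 (x 2) + sq3 a1 a2 a3 x,
    fun x => deriv a1 (x 0) - deriv a2 (x 1) + deriv a3 (x 2) + sq3 a1 a2 a3 x,
    fun x => deriv a1 (x 0) + deriv a2 (x 1) - deriv a3 (x 2) + sq3 a1 a2 a3 x]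

/-- The `k`-th complex component of a biquaternion. -/
def qc (k : Fin 4) (q : HC) : ℂ := ![q.re, q.imI, q.imJ, q.imK] k

/-!
Since `D² = -Δ`, applying `D` to `Df = -fα` gives `Δf = D(fα) = (Df)α + ∑ₖ eₖ f ∂ₖα`. For diagonal
`α` one has `∂ₖα = αₖ' eₖ` and `α² = -s`, hence `Δf = s f + ∑ₖ αₖ' eₖ f eₖ`. The maps `q ↦ eₖ q eₖ`
only change signs of components, so this equation decouples into four scalar ones.
-/

open Topology Filter

section TwiceDifferentiable

variable {E F : Type*} [NormedAddCommGroup E] [NormedSpace ℝ E]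
  [NormedAddCommGroup F] [NormedSpace ℝ F] {g : E → F} {x : E}

/-- `g` is twice (Fréchet) differentiable at `x`: differentiable near `x`, with derivative
differentiable at `x`. -/
def TwiceDifferentiableAt (g : E → F) (x : E) : Prop :=
  (∀ᶠ y in 𝓝 x, DifferentiableAt ℝ g y) ∧ DifferentiableAt ℝ (fderiv ℝ g) x

lemma TwiceDifferentiableAt.differentiableAt (hg : TwiceDifferentiableAt g x) :
    DifferentiableAt ℝ g x :=
  hg.1.self_of_nhds

lemma TwiceDifferentiableAt.of_contDiffAt (hg : ContDiffAt ℝ 2 g x) :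
    TwiceDifferentiableAt g x :=
  ⟨(hg.eventually (by simp)).mono fun _ hy => hy.differentiableAt two_ne_zero,
    (hg.fderiv_right (m := 1) one_add_one_eq_two.le).differentiableAt one_ne_zero⟩

end TwiceDifferentiable

section Scalar

variable {g h : (Fin 3 → ℝ) → ℂ} {x : Fin 3 → ℝ}

lemma pd_congr (j : Fin 3) (hgh : g =ᶠ[𝓝 x] h) : pd j g x = pd j h x := by
  rw [pd, pd, hgh.fderiv_eq]

lemma pd_neg (j : Fin 3) (g : (Fin 3 → ℝ) → ℂ) (x : Fin 3 → ℝ) :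
    pd j (fun y => -g y) x = -pd j g x := by
  simp only [pd, fderiv_fun_neg, neg_apply]

lemma pd_add (j : Fin 3) (hg : DifferentiableAt ℝ g x) (hh : DifferentiableAt ℝ h x) :
    pd j (fun y => g y + h y) x = pd j g x + pd j h x := by
  simp only [pd, fderiv_fun_add hg hh, add_apply]

lemma pd_sub (j : Fin 3) (hg : DifferentiableAt ℝ g x) (hh : DifferentiableAt ℝ h x) :
    pd j (fun y => g y - h y) x = pd j g x - pd j h x := by
  simp only [pd, fderiv_fun_sub hg hh, sub_apply]

lemma pd_mul (j : Fin 3) (hg : DifferentiableAt ℝ g x) (hh : DifferentiableAt ℝ h x) :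
    pd j (fun y => g y * h y) x = pd j g x * h x + g x * pd j h x := by
  simp only [pd, fderiv_fun_mul hg hh, add_apply, smul_apply, smul_eq_mul]
  ring

lemma pd_const (j : Fin 3) (c : ℂ) (x : Fin 3 → ℝ) : pd j (fun _ => c) x = 0 := by
  simp only [pd, fderiv_fun_const, Pi.zero_apply, zero_apply]

lemma pd_comp_apply {a : ℝ → ℂ} {i : Fin 3} (j : Fin 3) (ha : DifferentiableAt ℝ a (x i)) :
    pd j (fun y => a (y i)) x = if i = j then deriv a (x i) else 0 := by
  have hcomp : HasFDerivAt (fun y : Fin 3 → ℝ => a (y i)) _ x :=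
    HasFDerivAt.comp (g := a) x ha.hasFDerivAt (hasFDerivAt_apply i x)
  rw [pd, hcomp.fderiv]
  simp [Pi.single_apply]

lemma TwiceDifferentiableAt.hasFDerivAt_pd (hg : TwiceDifferentiableAt g x) (j : Fin 3) :
    HasFDerivAt (pd j g) ((fderiv ℝ (fderiv ℝ g) x).flip (Pi.single j 1)) x := by
  simpa using! hg.2.hasFDerivAt.clm_apply (hasFDerivAt_const (Pi.single j (1 : ℝ)) x)

lemma TwiceDifferentiableAt.pd_pd_comm (hg : TwiceDifferentiableAt g x) (i j : Fin 3) :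
    pd i (pd j g) x = pd j (pd i g) x := by
  rw [pd, pd, (hg.hasFDerivAt_pd j).fderiv, (hg.hasFDerivAt_pd i).fderiv]
  exact second_derivative_symmetric_of_eventually (hg.1.mono fun _ hy => hy.hasFDerivAt)
    hg.2.hasFDerivAt _ _

end Scalar

section Units

@[simp] lemma e1_components : e1.re = 0 ∧ e1.imI = 1 ∧ e1.imJ = 0 ∧ e1.imK = 0 :=
  ⟨rfl, rfl, rfl, rfl⟩

@[simp] lemma e2_components : e2.re = 0 ∧ e2.imI = 0 ∧ e2.imJ = 1 ∧ e2.imK = 0 :=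
  ⟨rfl, rfl, rfl, rfl⟩

@[simp] lemma e3_components : e3.re = 0 ∧ e3.imI = 0 ∧ e3.imJ = 0 ∧ e3.imK = 1 :=
  ⟨rfl, rfl, rfl, rfl⟩

@[simp] lemma quat_components (a b c d : ℂ) :
    (quat a b c d).re = a ∧ (quat a b c d).imI = b ∧ (quat a b c d).imJ = c ∧
      (quat a b c d).imK = d :=
  ⟨rfl, rfl, rfl, rfl⟩

lemma e1_mul_mul_e1 (q : HC) : e1 * q * e1 = quat (-q.re) (-q.imI) q.imJ q.imK := by
  ext <;> simp

lemma e2_mul_mul_e2 (q : HC) : e2 * q * e2 = quat (-q.re) q.imI (-q.imJ) q.imK := by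
  ext <;> simp

lemma e3_mul_mul_e3 (q : HC) : e3 * q * e3 = quat (-q.re) q.imI q.imJ (-q.imK) := by
  ext <;> simp

end Units

/-- Differentiability at a point of a biquaternion-valued function, expressed through its
components because `Quaternion ℂ` carries no norm in Mathlib. -/
def QDifferentiableAt (f : (Fin 3 → ℝ) → HC) (x : Fin 3 → ℝ) : Prop :=
  DifferentiableAt ℝ (fun y => (f y).re) x ∧ DifferentiableAt ℝ (fun y => (f y).imI) x ∧
  DifferentiableAt ℝ (fun y => (f y).imJ) x ∧ DifferentiableAt ℝ (fun y => (f y).imK) x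

/-- Twice differentiability at a point of a biquaternion-valued function, expressed through its
components as in `QDifferentiableAt`. -/
def QTwiceDifferentiableAt (f : (Fin 3 → ℝ) → HC) (x : Fin 3 → ℝ) : Prop :=
  TwiceDifferentiableAt (fun y => (f y).re) x ∧ TwiceDifferentiableAt (fun y => (f y).imI) x ∧
  TwiceDifferentiableAt (fun y => (f y).imJ) x ∧ TwiceDifferentiableAt (fun y => (f y).imK) x

section Quaternionic

variable {f g : (Fin 3 → ℝ) → HC} {x : Fin 3 → ℝ}

lemma QDifferentiableAt.const (q : HC) (x : Fin 3 → ℝ) : QDifferentiableAt (fun _ => q) x :=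
  ⟨differentiableAt_const _, differentiableAt_const _, differentiableAt_const _,
    differentiableAt_const _⟩

lemma QDifferentiableAt.add (hf : QDifferentiableAt f x) (hg : QDifferentiableAt g x) :
    QDifferentiableAt (fun y => f y + g y) x :=
  ⟨hf.1.add hg.1, hf.2.1.add hg.2.1, hf.2.2.1.add hg.2.2.1, hf.2.2.2.add hg.2.2.2⟩

lemma QDifferentiableAt.mul (hf : QDifferentiableAt f x) (hg : QDifferentiableAt g x) :
    QDifferentiableAt (fun y => f y * g y) x := by
  obtain ⟨f0, f1, f2, f3⟩ := hf
  obtain ⟨g0, g1, g2, g3⟩ := hg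
  simp only [QDifferentiableAt, Quaternion.re_mul, Quaternion.imI_mul, Quaternion.imJ_mul,
    Quaternion.imK_mul]
  refine ⟨?_, ?_, ?_, ?_⟩ <;> fun_prop

lemma QTwiceDifferentiableAt.qDifferentiableAt (hf : QTwiceDifferentiableAt f x) :
    QDifferentiableAt f x :=
  ⟨hf.1.differentiableAt, hf.2.1.differentiableAt, hf.2.2.1.differentiableAt,
    hf.2.2.2.differentiableAt⟩

lemma QC2On.qTwiceDifferentiableAt {Ω : Set (Fin 3 → ℝ)} (hf : QC2On f Ω) (hΩ : Ω ∈ 𝓝 x) :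
    QTwiceDifferentiableAt f x :=
  ⟨.of_contDiffAt (hf.1.contDiffAt hΩ), .of_contDiffAt (hf.2.1.contDiffAt hΩ),
    .of_contDiffAt (hf.2.2.1.contDiffAt hΩ), .of_contDiffAt (hf.2.2.2.contDiffAt hΩ)⟩

lemma QTwiceDifferentiableAt.qDifferentiableAt_pdq (hf : QTwiceDifferentiableAt f x) (j : Fin 3) :
    QDifferentiableAt (pdq j f) x :=
  ⟨(hf.1.hasFDerivAt_pd j).differentiableAt, (hf.2.1.hasFDerivAt_pd j).differentiableAt,
    (hf.2.2.1.hasFDerivAt_pd j).differentiableAt, (hf.2.2.2.hasFDerivAt_pd j).differentiableAt⟩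

lemma QTwiceDifferentiableAt.pdq_pdq_comm (hf : QTwiceDifferentiableAt f x) (i j : Fin 3) :
    pdq i (pdq j f) x = pdq j (pdq i f) x :=
  Quaternion.ext _ _ (hf.1.pd_pd_comm i j) (hf.2.1.pd_pd_comm i j) (hf.2.2.1.pd_pd_comm i j)
    (hf.2.2.2.pd_pd_comm i j)

lemma pdq_congr (j : Fin 3) (h : f =ᶠ[𝓝 x] g) : pdq j f x = pdq j g x :=
  Quaternion.ext _ _ (pd_congr j (h.fun_comp QuaternionAlgebra.re))
    (pd_congr j (h.fun_comp QuaternionAlgebra.imI)) (pd_congr j (h.fun_comp QuaternionAlgebra.imJ))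
    (pd_congr j (h.fun_comp QuaternionAlgebra.imK))

lemma pdq_neg (j : Fin 3) (f : (Fin 3 → ℝ) → HC) (x : Fin 3 → ℝ) :
    pdq j (fun y => -f y) x = -pdq j f x :=
  Quaternion.ext _ _ (pd_neg j _ x) (pd_neg j _ x) (pd_neg j _ x) (pd_neg j _ x)

lemma pdq_const (j : Fin 3) (q : HC) (x : Fin 3 → ℝ) : pdq j (fun _ => q) x = 0 :=
  Quaternion.ext _ _ (pd_const j _ x) (pd_const j _ x) (pd_const j _ x) (pd_const j _ x)

lemma pdq_add (j : Fin 3) (hf : QDifferentiableAt f x) (hg : QDifferentiableAt g x) :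
    pdq j (fun y => f y + g y) x = pdq j f x + pdq j g x :=
  Quaternion.ext _ _ (pd_add j hf.1 hg.1) (pd_add j hf.2.1 hg.2.1) (pd_add j hf.2.2.1 hg.2.2.1)
    (pd_add j hf.2.2.2 hg.2.2.2)

lemma pdq_mul (j : Fin 3) (hf : QDifferentiableAt f x) (hg : QDifferentiableAt g x) :
    pdq j (fun y => f y * g y) x = pdq j f x * g x + f x * pdq j g x := by
  obtain ⟨f0, f1, f2, f3⟩ := hf
  obtain ⟨g0, g1, g2, g3⟩ := hg
  ext <;>
    simp only [Quaternion.re_add, Quaternion.imI_add, Quaternion.imJ_add, Quaternion.imK_add,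
      Quaternion.re_mul, Quaternion.imI_mul, Quaternion.imJ_mul, Quaternion.imK_mul] <;>
    simp (disch := fun_prop) only [pdq, Quaternion.re_mul, Quaternion.imI_mul, Quaternion.imJ_mul,
      Quaternion.imK_mul, pd_add, pd_sub, pd_mul] <;>
    ring

lemma pdq_const_mul (j : Fin 3) (q : HC) (hf : QDifferentiableAt f x) :
    pdq j (fun y => q * f y) x = q * pdq j f x := by
  rw [pdq_mul j (.const q x) hf, pdq_const, zero_mul, zero_add]

lemma lapq_eq (f : (Fin 3 → ℝ) → HC) (x : Fin 3 → ℝ) :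
    lapq f x = pdq 0 (pdq 0 f) x + pdq 1 (pdq 1 f) x + pdq 2 (pdq 2 f) x :=
  rfl

lemma Dq_congr (h : f =ᶠ[𝓝 x] g) : Dq f x = Dq g x := by
  simp only [Dq, pdq_congr _ h]

lemma Dq_neg (f : (Fin 3 → ℝ) → HC) (x : Fin 3 → ℝ) : Dq (fun y => -f y) x = -Dq f x := by
  simp only [Dq, pdq_neg]
  ext <;> simp <;> ring

lemma Dq_mul (hf : QDifferentiableAt f x) (hg : QDifferentiableAt g x) :
    Dq (fun y => f y * g y) x = Dq f x * g x +
      (e1 * f x * pdq 0 g x + e2 * f x * pdq 1 g x + e3 * f x * pdq 2 g x) := by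
  simp only [Dq, pdq_mul _ hf hg]
  noncomm_ring

lemma QTwiceDifferentiableAt.pdq_Dq (hf : QTwiceDifferentiableAt f x) (j : Fin 3) :
    pdq j (Dq f) x =
      e1 * pdq j (pdq 0 f) x + e2 * pdq j (pdq 1 f) x + e3 * pdq j (pdq 2 f) x := by
  have hmul (q : HC) (i : Fin 3) : QDifferentiableAt (fun y => q * pdq i f y) x :=
    (QDifferentiableAt.const q x).mul (hf.qDifferentiableAt_pdq i)
  change pdq j (fun y => e1 * pdq 0 f y + e2 * pdq 1 f y + e3 * pdq 2 f y) x = _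
  rw [pdq_add j ((hmul e1 0).add (hmul e2 1)) (hmul e3 2), pdq_add j (hmul e1 0) (hmul e2 1)]
  simp only [pdq_const_mul j _ (hf.qDifferentiableAt_pdq _)]

lemma QTwiceDifferentiableAt.Dq_Dq (hf : QTwiceDifferentiableAt f x) :
    Dq (Dq f) x = -lapq f x := by
  rw [lapq_eq, Dq, hf.pdq_Dq, hf.pdq_Dq, hf.pdq_Dq, hf.pdq_pdq_comm 1 0, hf.pdq_pdq_comm 2 0,
    hf.pdq_pdq_comm 2 1]
  ext <;> simp <;> ring

lemma lapq_eq_of_Dq_add_mul_eq_zero {α : (Fin 3 → ℝ) → HC} (hf : QTwiceDifferentiableAt f x)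
    (hα : QDifferentiableAt α x) (h : ∀ᶠ y in 𝓝 x, Dq f y + f y * α y = 0) :
    lapq f x = -(f x * (α x * α x)) +
      (e1 * f x * pdq 0 α x + e2 * f x * pdq 1 α x + e3 * f x * pdq 2 α x) := by
  have hDf : Dq f =ᶠ[𝓝 x] fun y => -(f y * α y) := h.mono fun _ => eq_neg_of_add_eq_zero_left
  have hDfα : Dq f x * α x = -(f x * (α x * α x)) := by
    rw [hDf.eq_of_nhds, ← mul_assoc]
    exact neg_mul (f x * α x) (α x)
  calc lapq f x = -Dq (Dq f) x := by rw [hf.Dq_Dq, neg_neg]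
    _ = Dq (fun y => f y * α y) x := by rw [Dq_congr hDf, Dq_neg, neg_neg]
    _ = _ := by rw [Dq_mul hf.qDifferentiableAt hα, hDfα]

end Quaternionic

section Diagonal

variable {a1 a2 a3 : ℝ → ℂ} {x : Fin 3 → ℝ}

lemma qDifferentiableAt_dal (ha1 : DifferentiableAt ℝ a1 (x 0))
    (ha2 : DifferentiableAt ℝ a2 (x 1)) (ha3 : DifferentiableAt ℝ a3 (x 2)) :
    QDifferentiableAt (dal a1 a2 a3) x :=
  ⟨differentiableAt_const (0 : ℂ),
    DifferentiableAt.comp (g := a1) x ha1 (differentiableAt_apply 0 x),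
    DifferentiableAt.comp (g := a2) x ha2 (differentiableAt_apply 1 x),
    DifferentiableAt.comp (g := a3) x ha3 (differentiableAt_apply 2 x)⟩

lemma pdq_dal (ha1 : DifferentiableAt ℝ a1 (x 0)) (ha2 : DifferentiableAt ℝ a2 (x 1))
    (ha3 : DifferentiableAt ℝ a3 (x 2)) (j : Fin 3) :
    pdq j (dal a1 a2 a3) x =
      ![deriv a1 (x 0) • e1, deriv a2 (x 1) • e2, deriv a3 (x 2) • e3] j := by
  fin_cases j <;> ext <;>
    simp [pdq, dal, pd_const, pd_comp_apply _ ha1, pd_comp_apply _ ha2,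
      pd_comp_apply _ ha3]

lemma dal_mul_self (a1 a2 a3 : ℝ → ℂ) (x : Fin 3 → ℝ) :
    dal a1 a2 a3 x * dal a1 a2 a3 x = -(sq3 a1 a2 a3 x : HC) := by
  ext <;> simp [dal] <;> grind [sq3]

lemma lapq_eq_of_Dq_add_mul_dal_eq_zero {f : (Fin 3 → ℝ) → HC}
    (ha1 : DifferentiableAt ℝ a1 (x 0)) (ha2 : DifferentiableAt ℝ a2 (x 1))
    (ha3 : DifferentiableAt ℝ a3 (x 2)) (hf : QTwiceDifferentiableAt f x)
    (h : ∀ᶠ y in 𝓝 x, Dq f y + f y * dal a1 a2 a3 y = 0) :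
    lapq f x = sq3 a1 a2 a3 x • f x + (deriv a1 (x 0) • (e1 * f x * e1) +
      deriv a2 (x 1) • (e2 * f x * e2) + deriv a3 (x 2) • (e3 * f x * e3)) := by
  have hsq : f x * (dal a1 a2 a3 x * dal a1 a2 a3 x) = -(sq3 a1 a2 a3 x • f x) := by
    rw [dal_mul_self, ← Quaternion.mul_coe_eq_smul]
    exact mul_neg (f x) (sq3 a1 a2 a3 x : HC)
  have hsmul (c : ℂ) (p q : HC) : p * c • q = c • (p * q) := Algebra.mul_smul_comm c p q
  rw [lapq_eq_of_Dq_add_mul_eq_zero hf (qDifferentiableAt_dal ha1 ha2 ha3) h, hsq, neg_neg,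
    pdq_dal ha1 ha2 ha3, pdq_dal ha1 ha2 ha3, pdq_dal ha1 ha2 ha3]
  simp only [Matrix.cons_val, hsmul]

lemma qc_sq3_smul_add (k : Fin 4) (q : HC) :
    qc k (sq3 a1 a2 a3 x • q + (deriv a1 (x 0) • (e1 * q * e1) +
      deriv a2 (x 1) • (e2 * q * e2) + deriv a3 (x 2) • (e3 * q * e3))) =
      wpot a1 a2 a3 k x * qc k q := by
  simp only [e1_mul_mul_e1, e2_mul_mul_e2, e3_mul_mul_e3]
  fin_cases k <;> simp [qc, wpot] <;> ring

end Diagonal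

lemma qc_lapq (k : Fin 4) (f : (Fin 3 → ℝ) → HC) (x : Fin 3 → ℝ) :
    qc k (lapq f x) = lap (fun y => qc k (f y)) x := by
  fin_cases k <;> rfl

theorem components_solve_schroedinger_general {a1 a2 a3 : ℝ → ℂ} {f : (Fin 3 → ℝ) → HC}
    {x : Fin 3 → ℝ} (ha1 : DifferentiableAt ℝ a1 (x 0)) (ha2 : DifferentiableAt ℝ a2 (x 1))
    (ha3 : DifferentiableAt ℝ a3 (x 2)) (hf : QTwiceDifferentiableAt f x)
    (hfeq : ∀ᶠ y in 𝓝 x, Dq f y + f y * dal a1 a2 a3 y = 0) (k : Fin 4) :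
    -lap (fun y => qc k (f y)) x + wpot a1 a2 a3 k x * qc k (f x) = 0 := by
  rw [← qc_lapq, lapq_eq_of_Dq_add_mul_dal_eq_zero ha1 ha2 ha3 hf hfeq, qc_sq3_smul_add,
    neg_add_cancel]

/-- Proposition 2 of the paper: if `f` solves `Df + fα = 0` with
diagonal `α`, then each component `f_k` solves the scalar Schrödinger equation
`−Δf_k + w_k f_k = 0`. -/
theorem components_solve_schroedinger
    (Ω : Set (Fin 3 → ℝ)) (hΩ : IsOpen Ω)
    (a1 a2 a3 : ℝ → ℂ)
    (ha1 : ContDiff ℝ 1 a1) (ha2 : ContDiff ℝ 1 a2) (ha3 : ContDiff ℝ 1 a3)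
    (f : (Fin 3 → ℝ) → HC) (hf : QC2On f Ω)
    (hfeq : ∀ x ∈ Ω, Dq f x + f x * dal a1 a2 a3 x = 0) :
    ∀ k : Fin 4, ∀ x ∈ Ω,
      -lap (fun y => qc k (f y)) x + wpot a1 a2 a3 k x * qc k (f x) = 0 := by
  intro k x hx
  have hΩx : Ω ∈ 𝓝 x := hΩ.mem_nhds hx
  exact components_solve_schroedinger_general (ha1.differentiable one_ne_zero _)
    (ha2.differentiable one_ne_zero _) (ha3.differentiable one_ne_zero _)
    (hf.qTwiceDifferentiableAt hΩx) (eventually_of_mem hΩx hfeq) k
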